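/- Let 0 < α < 1 and z ≥ max{α, 1 − α}, and let ρ, σ be n×n positive semidefinite complex matrices. Then Q_{α,z}(ρ‖σ) equals the infimum, over all positive definite n×n complex matrices a, of α · Tr((a^{1/2} ρ^{α/z} a^{1/2})^{z/α}) + (1 − α) · Tr((a^{−1/2} σ^{(1−α)/z} a^{−1/2})^{z/(1−α)}), where a^{−1/2} is the inverse of the positive definite square root of a. -/

import Mathlib

open Matrix
open scoped ComplexOrder

/-- Real power of a positive semidefinite matrix via the spectral decomposition,
applying `x ^ t` (real `rpow`, so with the convention `0 ^ t = 0` for `t ≠ 0`)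
to the eigenvalues; returns `0` if the matrix is not Hermitian. -/
noncomputable def mpow {n : Type*} [Fintype n] [DecidableEq n]
    (A : Matrix n n ℂ) (t : ℝ) : Matrix n n ℂ :=
  if hA : A.IsHermitian then
    (hA.eigenvectorUnitary : Matrix n n ℂ) *
      Matrix.diagonal (fun i => ((hA.eigenvalues i ^ t : ℝ) : ℂ)) *
      star (hA.eigenvectorUnitary : Matrix n n ℂ)
  else 0


/-- The α-z-Rényi quantity `Q_{α,z}(ρ‖σ) = Tr((σ^((1−α)/2z) ρ^(α/z) σ^((1−α)/2z))^z)`. -/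
noncomputable def Qaz {n : Type*} [Fintype n] [DecidableEq n]
    (α z : ℝ) (ρ σ : Matrix n n ℂ) : ℝ :=
  ((mpow (mpow σ ((1 - α) / (2 * z)) * mpow ρ (α / z) * mpow σ ((1 - α) / (2 * z))) z).trace).re


section helpers
variable {n : Type*} [Fintype n] [DecidableEq n]

lemma mpow_eq_cfc {A : Matrix n n ℂ} (hA : A.IsHermitian) (t : ℝ) :
    mpow A t = cfc (fun x : ℝ => x ^ t) A := by
  rw [hA.cfc_eq, mpow, dif_pos hA, Matrix.IsHermitian.cfc, Unitary.conjStarAlgAut_apply]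
  rfl

lemma mcont (A : Matrix n n ℂ) (f : ℝ → ℝ) : ContinuousOn f (spectrum ℝ A) :=
  (Matrix.finite_real_spectrum (A := A)).continuousOn f

lemma mpow_isHermitian (A : Matrix n n ℂ) (t : ℝ) : (mpow A t).IsHermitian := by
  by_cases hA : A.IsHermitian
  · rw [mpow_eq_cfc hA]
    exact cfc_predicate (R := ℝ) (p := IsSelfAdjoint) _ A
  · rw [mpow, dif_neg hA]; exact Matrix.isHermitian_zero

lemma spec_nonneg {A : Matrix n n ℂ} (hA : A.PosSemidef) {x : ℝ} (hx : x ∈ spectrum ℝ A) :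
    0 ≤ x := by
  rw [hA.1.spectrum_real_eq_range_eigenvalues] at hx
  obtain ⟨i, rfl⟩ := hx
  exact hA.eigenvalues_nonneg i

lemma spec_pos {A : Matrix n n ℂ} (hA : A.PosDef) {x : ℝ} (hx : x ∈ spectrum ℝ A) :
    0 < x := by
  rw [hA.1.spectrum_real_eq_range_eigenvalues] at hx
  obtain ⟨i, rfl⟩ := hx
  exact hA.eigenvalues_pos i

lemma mpow_posSemidef {A : Matrix n n ℂ} (hA : A.PosSemidef) (t : ℝ) :
    (mpow A t).PosSemidef := by
  rw [mpow, dif_pos hA.1]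
  refine (Matrix.PosSemidef.diagonal ?_).mul_mul_conjTranspose_same _
  intro i
  simpa using Real.rpow_nonneg (hA.eigenvalues_nonneg i) t

lemma mpow_mpow {A : Matrix n n ℂ} (hA : A.PosSemidef) (s t : ℝ) :
    mpow (mpow A s) t = mpow A (s * t) := by
  rw [mpow_eq_cfc (mpow_isHermitian A s), mpow_eq_cfc hA.1, mpow_eq_cfc hA.1,
    ← cfc_comp' (fun x : ℝ => x ^ t) (fun x : ℝ => x ^ s) A
      (((Matrix.finite_real_spectrum (A := A)).image _).continuousOn _) (mcont A _) hA.1.isSelfAdjoint]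
  refine cfc_congr fun x hx => ?_
  exact (Real.rpow_mul (spec_nonneg hA hx) s t).symm

lemma mpow_add {A : Matrix n n ℂ} (hA : A.PosDef) (s t : ℝ) :
    mpow A s * mpow A t = mpow A (s + t) := by
  rw [mpow_eq_cfc hA.1, mpow_eq_cfc hA.1, mpow_eq_cfc hA.1,
    ← cfc_mul _ _ A (mcont A _) (mcont A _)]
  refine cfc_congr fun x hx => ?_
  exact (Real.rpow_add (spec_pos hA hx) s t).symm

lemma mpow_add' {A : Matrix n n ℂ} (hA : A.PosSemidef) {s t : ℝ} (h : s + t ≠ 0) :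
    mpow A s * mpow A t = mpow A (s + t) := by
  rw [mpow_eq_cfc hA.1, mpow_eq_cfc hA.1, mpow_eq_cfc hA.1,
    ← cfc_mul _ _ A (mcont A _) (mcont A _)]
  refine cfc_congr fun x hx => ?_
  exact (Real.rpow_add' (spec_nonneg hA hx) h).symm

lemma mpow_zero {A : Matrix n n ℂ} (hA : A.IsHermitian) : mpow A 0 = 1 := by
  rw [mpow_eq_cfc hA]
  simp only [Real.rpow_zero]
  exact cfc_const_one ℝ A hA

lemma mpow_one {A : Matrix n n ℂ} (hA : A.IsHermitian) : mpow A 1 = A := by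
  rw [mpow_eq_cfc hA]
  simp only [Real.rpow_one]
  exact cfc_id' ℝ A hA

lemma mpow_mul_neg {A : Matrix n n ℂ} (hA : A.PosDef) (s : ℝ) : mpow A s * mpow A (-s) = 1 := by
  rw [mpow_add hA, add_neg_cancel, mpow_zero hA.1]

lemma mpow_posDef {A : Matrix n n ℂ} (hA : A.PosDef) (t : ℝ) :
    (mpow A t).PosDef := by
  rw [(mpow_isHermitian A t).posDef_iff_eigenvalues_pos]
  intro i
  have h := (mpow_isHermitian A t).eigenvalues_mem_spectrum_real i
  revert h
  generalize (mpow_isHermitian A t).eigenvalues i = x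
  intro h
  rw [mpow_eq_cfc hA.1, cfc_map_spectrum _ A hA.1.isSelfAdjoint (mcont A _)] at h
  obtain ⟨y, hy, rfl⟩ := h
  exact Real.rpow_pos_of_pos (spec_pos hA hy) t

lemma trace_mpow {A : Matrix n n ℂ} (hA : A.IsHermitian) (t : ℝ) :
    (mpow A t).trace = ∑ i, ((hA.eigenvalues i ^ t : ℝ) : ℂ) := by
  rw [mpow, dif_pos hA, Matrix.trace_mul_cycle]
  simp [Matrix.trace_diagonal]

lemma trace_mpow_comm (S T : Matrix n n ℂ) (h1 : (S * T).IsHermitian) (h2 : (T * S).IsHermitian)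
    (t : ℝ) : (mpow (S * T) t).trace = (mpow (T * S) t).trace := by
  rw [trace_mpow h1, trace_mpow h2]
  have := (h1.eigenvalues_eq_eigenvalues_iff h2).2 (Matrix.charpoly_mul_comm S T)
  rw [this]

lemma mpow_intertwine {K L S : Matrix n n ℂ} (hK : K.IsHermitian) (hL : L.IsHermitian)
    (h : K * S = S * L) (t : ℝ) : mpow K t * S = S * mpow L t := by
  set U := (hK.eigenvectorUnitary : Matrix n n ℂ) with hU
  set V := (hL.eigenvectorUnitary : Matrix n n ℂ) with hV
  have hUU : star U * U = 1 := Unitary.coe_star_mul_self _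
  have hUU' : U * star U = 1 := Unitary.coe_mul_star_self _
  have hVV : star V * V = 1 := Unitary.coe_star_mul_self _
  have hVV' : V * star V = 1 := Unitary.coe_mul_star_self _
  have key : ∀ s, mpow K s * S = S * mpow L s ↔
      Matrix.diagonal (fun i => ((hK.eigenvalues i ^ s : ℝ) : ℂ)) * (star U * S * V)
       = (star U * S * V) * Matrix.diagonal (fun i => ((hL.eigenvalues i ^ s : ℝ) : ℂ)) := by
    intro s
    rw [mpow, mpow, dif_pos hK, dif_pos hL, ← hU, ← hV]
    generalize Matrix.diagonal (fun i => ((hK.eigenvalues i ^ s : ℝ) : ℂ)) = D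
    generalize Matrix.diagonal (fun i => ((hL.eigenvalues i ^ s : ℝ) : ℂ)) = E
    constructor
    · intro h
      have := congrArg (fun M => star U * M * V) h
      simp only [mul_assoc] at this ⊢
      rw [hVV, mul_one] at this
      rw [← mul_assoc (star U) U, hUU, one_mul] at this
      exact this
    · intro h
      have := congrArg (fun M => U * M * star V) h
      simp only [mul_assoc] at this ⊢
      rw [hVV', mul_one, ← mul_assoc U (star U), hUU', one_mul] at this
      exact this
  rw [key]
  have h1 := (key 1).1 (by rw [mpow_one hK, mpow_one hL, h])
  ext i j
  have h1' := congrFun (congrFun h1 i) j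
  simp only [Matrix.diagonal_mul, Matrix.mul_diagonal, Real.rpow_one] at h1' ⊢
  by_cases h0 : (star U * S * V) i j = 0
  · simp [h0]
  · rw [mul_comm] at h1'
    have := mul_left_cancel₀ h0 h1'
    rw [Complex.ofReal_inj] at this
    rw [this, mul_comm]

lemma trace_mpow_mul_mpow {K N : Matrix n n ℂ} (hK : K.IsHermitian) (hN : N.IsHermitian) :
    ∃ w : n → n → ℝ, (∀ i j, 0 ≤ w i j) ∧ ∀ s t : ℝ, ((mpow K s * mpow N t).trace).re =
      ∑ i, ∑ j, w i j * (hK.eigenvalues i ^ s * hN.eigenvalues j ^ t) := by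
  set U := (hK.eigenvectorUnitary : Matrix n n ℂ) with hU
  set V := (hN.eigenvectorUnitary : Matrix n n ℂ) with hV
  refine ⟨fun i j => Complex.normSq ((star U * V) i j), fun i j => Complex.normSq_nonneg _, ?_⟩
  intro s t
  rw [mpow, mpow, dif_pos hK, dif_pos hN, ← hU, ← hV]
  generalize (fun i => hK.eigenvalues i ^ s) = f
  have : ∀ D E : Matrix n n ℂ, (U * D * star U * (V * E * star V)).trace
      = (D * (star U * V) * (E * star (star U * V))).trace := by
    intro D E
    rw [star_mul, star_star]
    calc _ = (U * (D * star U * V * E * star V)).trace := by simp only [mul_assoc]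
      _ = _ := by rw [Matrix.trace_mul_comm]; simp only [mul_assoc]
  rw [this]
  simp only [Matrix.trace, Matrix.diag, Matrix.mul_apply (M := _ * _), Matrix.diagonal_mul, Complex.re_sum]
  refine Finset.sum_congr rfl fun i _ => Finset.sum_congr rfl fun j _ => ?_
  rw [Matrix.star_apply, Complex.star_def]
  generalize (star U * V) i j = c
  have : ∀ x y : ℝ, ((x : ℂ) * c * ((y : ℂ) * (starRingEnd ℂ) c)) = ((Complex.normSq c * (x * y) : ℝ) : ℂ) := by
    intro x y
    push_cast
    rw [← Complex.mul_conj]; ring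
  rw [this, Complex.ofReal_re]

lemma scalar_klein {p x k : ℝ} (hp : 1 ≤ p) (hx : 0 ≤ x) (hk : 0 ≤ k) :
    k ^ p + p * (k ^ (p - 1) * x - k ^ (p - 1) * k) ≤ x ^ p := by
  rcases hk.eq_or_lt with rfl | hk
  · rcases hp.eq_or_lt with rfl | hp
    · simp
    · rw [Real.zero_rpow (by linarith), Real.zero_rpow (by linarith)]
      simpa using Real.rpow_nonneg hx p
  · have h := one_add_mul_self_le_rpow_one_add (s := x / k - 1) (by
      have := div_nonneg hx hk.le; linarith) hp
    rw [add_sub_cancel, Real.div_rpow hx hk.le, le_div_iff₀ (by positivity)] at h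
    refine le_trans (le_of_eq ?_) h
    rw [Real.rpow_sub_one hk.ne']
    field_simp

lemma klein {K N : Matrix n n ℂ} (hK : K.PosSemidef) (hN : N.PosSemidef) {p : ℝ} (hp : 1 ≤ p) :
    ((mpow K p).trace).re + p * ((mpow K (p - 1) * (N - K)).trace).re ≤ ((mpow N p).trace).re := by
  obtain ⟨w, hw, h⟩ := trace_mpow_mul_mpow hK.1 hN.1
  have h1 := h p 0
  have h2 := h 0 p
  have h3 := h (p - 1) 1
  rw [mpow_zero hN.1, mul_one] at h1
  rw [mpow_zero hK.1, one_mul] at h2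
  rw [mpow_one hN.1] at h3
  have h4 : mpow K (p - 1) * K = mpow K p := by
    conv_lhs => rw [← mpow_one hK.1, mpow_mpow hK, one_mul, mpow_add' hK (by linarith)]
    simp
  rw [mul_sub, Matrix.trace_sub, Complex.sub_re, h4, h1, h2, h3, ← Finset.sum_sub_distrib,
    Finset.mul_sum, ← Finset.sum_add_distrib]
  refine Finset.sum_le_sum fun i _ => ?_
  rw [← Finset.sum_sub_distrib,
    Finset.mul_sum, ← Finset.sum_add_distrib]
  refine Finset.sum_le_sum fun j _ => ?_
  have := mul_le_mul_of_nonneg_left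
    (scalar_klein hp (hN.eigenvalues_nonneg j) (hK.eigenvalues_nonneg i)) (hw i j)
  refine le_trans (le_of_eq ?_) (this.trans (le_of_eq ?_))
  · rw [Real.rpow_zero, Real.rpow_one, ← Real.rpow_add_one' (hK.eigenvalues_nonneg i) (by linarith)]
    simp; ring
  · simp

lemma trace_mul_nonneg {P N : Matrix n n ℂ} (hP : P.PosSemidef) (hN : N.PosSemidef) :
    0 ≤ ((P * N).trace).re := by
  obtain ⟨w, hw, h⟩ := trace_mpow_mul_mpow hP.1 hN.1
  have := h 1 1
  rw [mpow_one hP.1, mpow_one hN.1] at this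
  rw [this]
  refine Finset.sum_nonneg fun i _ => Finset.sum_nonneg fun j _ => mul_nonneg (hw i j) ?_
  exact mul_nonneg (Real.rpow_nonneg (hP.eigenvalues_nonneg i) _)
    (Real.rpow_nonneg (hN.eigenvalues_nonneg j) _)

lemma trace_mono {K N : Matrix n n ℂ} (hK : K.PosSemidef) (hKN : (N - K).PosSemidef)
    {p : ℝ} (hp : 1 ≤ p) : ((mpow K p).trace).re ≤ ((mpow N p).trace).re := by
  have hN : N.PosSemidef := by simpa using hK.add hKN
  have h1 := klein hK hN hp
  have h2 := trace_mul_nonneg (mpow_posSemidef hK (p - 1)) hKN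
  nlinarith

open scoped Matrix.Norms.L2Operator in
lemma continuous_trace_mpow {K : ℝ → Matrix n n ℂ} (hK : Continuous K)
    (hH : ∀ x, (K x).IsHermitian) {p : ℝ} (hp : 0 ≤ p) :
    Continuous fun x => ((mpow (K x) p).trace).re := by
  have : (fun x => mpow (K x) p) = fun x => cfc (fun x : ℝ => x ^ p) (K x) := by
    funext x; exact mpow_eq_cfc (hH x) p
  have h2 : Continuous fun x => mpow (K x) p := by
    rw [this]
    exact Continuous.cfc_of_mem_nhdsSet (s := Set.univ) (fun x : ℝ => x ^ p) Filter.univ_mem hK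
      (fun x => hH x) (Real.continuous_rpow_const hp).continuousOn
  exact Complex.continuous_re.comp (Continuous.matrix_trace h2)

end helpers

section core
set_option linter.unusedSectionVars false
variable {n : Type*} [Fintype n] [DecidableEq n]

lemma posDef_conj {A B : Matrix n n ℂ} (hA : A.PosDef) (hB : B.PosDef) : (B * A * B).PosDef := by
  have := hA.mul_mul_conjTranspose_same (B := B) (by
    rw [← Matrix.coe_vecMulLinear] 
    exact Matrix.vecMul_injective_of_isUnit hB.isUnit)
  rwa [hB.1.eq] at this

lemma posSemidef_conj {A B : Matrix n n ℂ} (hA : A.PosSemidef) (hB : B.IsHermitian) :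
    (B * A * B).PosSemidef := by
  have := hA.mul_mul_conjTranspose_same B
  rwa [hB.eq] at this

lemma posDef_cancel {A : Matrix n n ℂ} (hA : A.PosDef) : A * A⁻¹ = 1 ∧ A⁻¹ * A = 1 :=
  ⟨Matrix.mul_nonsing_inv A ((Matrix.isUnit_iff_isUnit_det A).1 hA.isUnit),
   Matrix.nonsing_inv_mul A ((Matrix.isUnit_iff_isUnit_det A).1 hA.isUnit)⟩

lemma core {A B : Matrix n n ℂ} (hA : A.PosDef) (hB : B.PosDef) {α z : ℝ}
    (hα0 : 0 < α) (hα1 : α < 1) (hz1 : α ≤ z) (hz2 : 1 - α ≤ z) :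
    ∃ a₀ : Matrix n n ℂ, a₀.PosDef ∧
      (α * ((mpow (A * a₀ * A) (z / α)).trace).re
        + (1 - α) * ((mpow (B * a₀⁻¹ * B) (z / (1 - α))).trace).re
        = ((mpow (B * (A * A) * B) z).trace).re) ∧
      ∀ a : Matrix n n ℂ, a.PosDef →
        ((mpow (B * (A * A) * B) z).trace).re ≤
        α * ((mpow (A * a * A) (z / α)).trace).re
        + (1 - α) * ((mpow (B * a⁻¹ * B) (z / (1 - α))).trace).re := by
  have hβ : 0 < 1 - α := by linarith
  obtain ⟨hB1, hB2⟩ := posDef_cancel hB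
  have hAA : (A * A).PosDef := by
    have := posDef_conj Matrix.PosDef.one hA
    rwa [mul_one] at this
  have hBB : (B * B).PosDef := by
    have := posDef_conj Matrix.PosDef.one hB
    rwa [mul_one] at this
  set M := B * (A * A) * B with hMdef
  set H := A * (B * B) * A with hHdef
  have hM : M.PosDef := posDef_conj hAA hB
  have hH : H.PosDef := posDef_conj hBB hA
  have hHM : ∀ t, ((mpow H t).trace) = (mpow M t).trace := by
    intro t
    have e1 : H = (A * B) * (B * A) := by simp only [hHdef, mul_assoc]
    have e2 : M = (B * A) * (A * B) := by simp only [hMdef, mul_assoc]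
    rw [e1, e2]
    exact trace_mpow_comm _ _ (e1 ▸ hH.1) (e2 ▸ hM.1) t
  have hitw : ∀ t, mpow H t * (A * B) = A * B * mpow M t := fun t =>
    mpow_intertwine hH.1 hM.1 (by simp only [hHdef, hMdef, mul_assoc]) t
  have hitw' : ∀ t, mpow M t * (B * A) = B * A * mpow H t := fun t =>
    mpow_intertwine hM.1 hH.1 (by simp only [hHdef, hMdef, mul_assoc]) t
  set a₀ := B * mpow M (α - 1) * B with ha₀
  have hpa : a₀.PosDef := posDef_conj (mpow_posDef hM _) hB
  have hM1 : mpow M (α - 1) * mpow M (1 - α) = 1 := by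
    rw [← neg_sub α 1]; exact mpow_mul_neg hM _
  have hinv : a₀⁻¹ = B⁻¹ * mpow M (1 - α) * B⁻¹ := by
    apply Matrix.inv_eq_right_inv
    calc a₀ * (B⁻¹ * mpow M (1 - α) * B⁻¹)
        = B * mpow M (α - 1) * (B * B⁻¹) * mpow M (1 - α) * B⁻¹ := by simp only [ha₀, mul_assoc]
      _ = B * (mpow M (α - 1) * mpow M (1 - α)) * B⁻¹ := by rw [hB1, mul_one, mul_assoc B]
      _ = 1 := by rw [hM1, mul_one, hB1]
  have hX : A * a₀ * A = mpow H α := by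
    calc A * a₀ * A = (A * B * mpow M (α - 1)) * (B * A) := by simp only [ha₀, mul_assoc]
      _ = mpow H (α - 1) * (A * B * (B * A)) := by rw [← hitw, mul_assoc]
      _ = mpow H (α - 1) * mpow H 1 := by rw [mpow_one hH.1, hHdef]; simp only [mul_assoc]
      _ = _ := by rw [mpow_add hH]; simp
  have hY : B * a₀⁻¹ * B = mpow M (1 - α) := by
    calc B * a₀⁻¹ * B = (B * B⁻¹) * mpow M (1 - α) * (B⁻¹ * B) := by rw [hinv]; simp only [mul_assoc]
      _ = _ := by rw [hB1, hB2, one_mul, mul_one]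
  have hXt : ((mpow (A * a₀ * A) (z / α)).trace).re = ((mpow M z).trace).re := by
    rw [hX, mpow_mpow hH.posSemidef, mul_div_cancel₀ _ hα0.ne', hHM]
  have hYt : ((mpow (B * a₀⁻¹ * B) (z / (1 - α))).trace).re = ((mpow M z).trace).re := by
    rw [hY, mpow_mpow hM.posSemidef, mul_div_cancel₀ _ hβ.ne']
  refine ⟨a₀, hpa, ?_, ?_⟩
  · rw [hXt, hYt]; ring
  intro a ha
  obtain ⟨ha1, ha2⟩ := posDef_cancel ha
  have k1 := klein (posDef_conj hpa hA).posSemidef (posDef_conj ha hA).posSemidef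
    (p := z / α) ((one_le_div hα0).2 hz1)
  have k2 := klein (posDef_conj hpa.inv hB).posSemidef (posDef_conj ha.inv hB).posSemidef
    (p := z / (1 - α)) ((one_le_div hβ).2 hz2)
  rw [hXt] at k1
  rw [hYt] at k2
  rw [hX, mpow_mpow hH.posSemidef, mul_sub α (z / α), mul_div_cancel₀ _ hα0.ne', mul_one, ← hX] at k1
  rw [hY, mpow_mpow hM.posSemidef, mul_sub (1 - α) (z / (1 - α)), mul_div_cancel₀ _ hβ.ne', mul_one, ← hY] at k2
  set P := mpow M (z - (1 - α)) with hP
  have hPp : P.PosSemidef := mpow_posSemidef hM.posSemidef _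
  -- convexity of the inverse
  have c1 : 0 ≤ ((P * (B * a⁻¹ * B - B * a₀⁻¹ * B)).trace).re
      + ((P * (B * (a₀⁻¹ * (a - a₀) * a₀⁻¹) * B)).trace).re := by
    have hps : (B * ((a⁻¹ - a₀⁻¹) * a * (a⁻¹ - a₀⁻¹)) * B).PosSemidef :=
      posSemidef_conj (posSemidef_conj ha.posSemidef (ha.inv.1.sub hpa.inv.1)) hB.1
    have := trace_mul_nonneg hPp hps
    rw [← Complex.add_re, ← Matrix.trace_add, ← mul_add]
    have e : B * a⁻¹ * B - B * a₀⁻¹ * B + B * (a₀⁻¹ * (a - a₀) * a₀⁻¹) * B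
       = B * ((a⁻¹ - a₀⁻¹) * a * (a⁻¹ - a₀⁻¹)) * B := by
      have q1 : (a⁻¹ - a₀⁻¹) * a * (a⁻¹ - a₀⁻¹) = a⁻¹ - a₀⁻¹ + a₀⁻¹ * (a - a₀) * a₀⁻¹ := by
        obtain ⟨b1, b2⟩ := posDef_cancel hpa
        rw [sub_mul, ha2, mul_sub a₀⁻¹, b2, sub_mul, mul_sub, sub_mul, one_mul, mul_sub (a₀⁻¹ * a), mul_assoc a₀⁻¹ a a⁻¹, ha1]
        noncomm_ring
      rw [q1]; noncomm_ring
    rw [e]; exact this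
  -- the two linear terms agree
  have hl : A * mpow H (z - α) * A = a₀⁻¹ * B * P * B * a₀⁻¹ := by
    have l1 : B * (A * mpow H (z - α) * A) * B = mpow M (z - α + 1) := by
      calc B * (A * mpow H (z - α) * A) * B = B * A * mpow H (z - α) * (A * B) := by
            simp only [mul_assoc]
        _ = mpow M (z - α) * (B * A * (A * B)) := by rw [← hitw', mul_assoc]
        _ = mpow M (z - α) * mpow M 1 := by rw [mpow_one hM.1, hMdef]; simp only [mul_assoc]
        _ = _ := mpow_add hM _ _
    have l2 : B * (a₀⁻¹ * B * P * B * a₀⁻¹) * B = mpow M (z - α + 1) := by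
      calc B * (a₀⁻¹ * B * P * B * a₀⁻¹) * B = (B * a₀⁻¹ * B) * P * (B * a₀⁻¹ * B) := by
            simp only [mul_assoc]
        _ = _ := by rw [hY, hP, mpow_add hM, mpow_add hM]; congr 1; ring
    have l3 : ∀ Z, B⁻¹ * (B * Z * B) * B⁻¹ = Z := by
      intro Z
      calc B⁻¹ * (B * Z * B) * B⁻¹ = (B⁻¹ * B) * Z * (B * B⁻¹) := by simp only [mul_assoc]
        _ = Z := by rw [hB1, hB2, one_mul, mul_one]
    rw [← l3 (A * mpow H (z - α) * A), l1, ← l2, l3]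
  have t1 : (mpow H (z - α) * (A * a * A - A * a₀ * A)).trace
      = (P * (B * (a₀⁻¹ * (a - a₀) * a₀⁻¹) * B)).trace := by
    have e1 : (mpow H (z - α) * (A * a * A - A * a₀ * A)).trace
        = (A * mpow H (z - α) * A * (a - a₀)).trace := by
      have : mpow H (z - α) * (A * a * A - A * a₀ * A) = (mpow H (z - α) * A * (a - a₀)) * A := by
        noncomm_ring
      rw [this, Matrix.trace_mul_comm]; simp only [mul_assoc]
    have e2 : (P * (B * (a₀⁻¹ * (a - a₀) * a₀⁻¹) * B)).trace
        = (a₀⁻¹ * B * P * B * a₀⁻¹ * (a - a₀)).trace := by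
      have : P * (B * (a₀⁻¹ * (a - a₀) * a₀⁻¹) * B) = (P * B * a₀⁻¹ * (a - a₀)) * (a₀⁻¹ * B) := by
        simp only [mul_assoc]
      rw [this, Matrix.trace_mul_comm]; simp only [mul_assoc]
    rw [e1, e2, hl]
  rw [t1] at k1
  set u := ((P * (B * (a₀⁻¹ * (a - a₀) * a₀⁻¹) * B)).trace).re
  set v := ((P * (B * a⁻¹ * B - B * a₀⁻¹ * B)).trace).re
  have k1' := mul_le_mul_of_nonneg_left k1 hα0.le
  have k2' := mul_le_mul_of_nonneg_left k2 hβ.le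
  rw [mul_add, ← mul_assoc α (z / α), mul_div_cancel₀ _ hα0.ne'] at k1'
  rw [mul_add, ← mul_assoc (1 - α) (z / (1 - α)), mul_div_cancel₀ _ hβ.ne'] at k2'
  have : 0 ≤ z * (v + u) := mul_nonneg (by linarith) c1
  nlinarith

lemma sq_trace_comm {S T : Matrix n n ℂ} (hS : S.IsHermitian) (hT : T.IsHermitian) (p : ℝ) :
    (mpow (S * (T * T) * S) p).trace = (mpow (T * (S * S) * T) p).trace := by
  have e1 : S * (T * T) * S = (S * T) * (T * S) := by simp only [mul_assoc]
  have e2 : T * (S * S) * T = (T * S) * (S * T) := by simp only [mul_assoc]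
  have key : ∀ S T : Matrix n n ℂ, S.IsHermitian → T.IsHermitian → ((S * T) * (T * S)).IsHermitian := by
    intro S T hS hT
    rw [Matrix.IsHermitian]
    simp only [Matrix.conjTranspose_mul, hS.eq, hT.eq]
  rw [e1, e2]
  exact trace_mpow_comm _ _ (key _ _ hS hT) (key _ _ hT hS) p

lemma herm_conj {S T : Matrix n n ℂ} (hS : S.IsHermitian) (hT : T.IsHermitian) :
    (S * T * S).IsHermitian := by
  rw [Matrix.IsHermitian]
  simp only [Matrix.conjTranspose_mul, hS.eq, hT.eq, mul_assoc]

/-- shift by a multiple of the identity -/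
noncomputable def shiftM (A : Matrix n n ℂ) (x : ℝ) : Matrix n n ℂ :=
  A + (x : ℂ) • (1 : Matrix n n ℂ)

lemma herm_shift {A : Matrix n n ℂ} (hA : A.IsHermitian) (x : ℝ) :
    (shiftM A x).IsHermitian := by
  rw [Matrix.IsHermitian, shiftM]
  simp [hA.eq]

lemma posDef_shift {A : Matrix n n ℂ} (hA : A.PosSemidef) {x : ℝ} (hx : 0 < x) :
    (shiftM A x).PosDef :=
  Matrix.PosDef.posSemidef_add hA (Matrix.PosDef.one.smul (by exact_mod_cast hx))

lemma sq_shift {A : Matrix n n ℂ} (hA : A.PosSemidef) {x : ℝ} (hx : 0 < x) :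
    ((shiftM A x) * (shiftM A x) - A * A).PosSemidef := by
  have : (A + (x : ℂ) • (1 : Matrix n n ℂ)) * (A + (x : ℂ) • (1 : Matrix n n ℂ)) - A * A
      = ((2 * x : ℝ) : ℂ) • A + ((x * x : ℝ) : ℂ) • (1 : Matrix n n ℂ) := by
    simp only [add_mul, mul_add, smul_mul_assoc, mul_smul_comm, one_mul, mul_one]
    push_cast
    module
  rw [shiftM, this]
  exact (hA.smul (by exact_mod_cast (by positivity : 0 ≤ 2 * x))).add
    (Matrix.PosSemidef.one.smul (by exact_mod_cast (by positivity : 0 ≤ x * x)))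

/-- the objective function -/
noncomputable def objF (α z : ℝ) (A B a : Matrix n n ℂ) : ℝ :=
  α * ((mpow (mpow a (1 / 2) * (A * A) * mpow a (1 / 2)) (z / α)).trace).re
    + (1 - α) * ((mpow ((mpow a (1 / 2))⁻¹ * (B * B) * (mpow a (1 / 2))⁻¹)
      (z / (1 - α))).trace).re

lemma shiftM_zero (A : Matrix n n ℂ) : shiftM A 0 = A := by simp [shiftM]

lemma shiftM_cont (A : Matrix n n ℂ) : Continuous (shiftM A) :=
  continuous_const.add (Complex.continuous_ofReal.smul continuous_const)

lemma objF_eq (α z : ℝ) {A B a : Matrix n n ℂ} (hA : A.IsHermitian) (hB : B.IsHermitian)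
    (ha : a.PosDef) : objF α z A B a = α * ((mpow (A * a * A) (z / α)).trace).re
        + (1 - α) * ((mpow (B * a⁻¹ * B) (z / (1 - α))).trace).re := by
  have hc := mpow_posDef ha (1 / 2)
  have hcc : mpow a (1 / 2) * mpow a (1 / 2) = a := by
    rw [mpow_add ha, add_halves, mpow_one ha.1]
  have hcc' : (mpow a (1 / 2))⁻¹ * (mpow a (1 / 2))⁻¹ = a⁻¹ := by
    rw [← Matrix.mul_inv_rev, hcc]
  rw [objF, sq_trace_comm hc.1 hA, sq_trace_comm hc.inv.1 hB, hcc, hcc']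

lemma hsq {A : Matrix n n ℂ} (hA : A.IsHermitian) : (A * A).PosSemidef := by
  have := posSemidef_conj Matrix.PosSemidef.one hA
  rwa [mul_one] at this

lemma hQc {A B : Matrix n n ℂ} (hA : A.IsHermitian) (hB : B.IsHermitian) {z : ℝ} (hz : 0 ≤ z) :
    Continuous fun x =>
      ((mpow (shiftM B x * (shiftM A x * shiftM A x) * shiftM B x) z).trace).re :=
  continuous_trace_mpow
    (((shiftM_cont B).mul ((shiftM_cont A).mul (shiftM_cont A))).mul (shiftM_cont B))
    (fun x => herm_conj (herm_shift hB x) (hsq (herm_shift hA x)).1) hz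

lemma hFc1 {A c : Matrix n n ℂ} (hA : A.IsHermitian) (hc : c.IsHermitian) {z : ℝ} (hz : 0 ≤ z) :
    Continuous fun x => ((mpow (c * (shiftM A x * shiftM A x) * c) z).trace).re :=
  continuous_trace_mpow
    ((continuous_const.mul ((shiftM_cont A).mul (shiftM_cont A))).mul continuous_const)
    (fun x => herm_conj hc (hsq (herm_shift hA x)).1) hz

lemma variational {A B : Matrix n n ℂ} (hA : A.PosSemidef) (hB : B.PosSemidef) {α z : ℝ}
    (hα0 : 0 < α) (hα1 : α < 1) (hz1 : α ≤ z) (hz2 : 1 - α ≤ z) :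
    ((mpow (B * (A * A) * B) z).trace).re =
      ⨅ a : {a : Matrix n n ℂ // a.PosDef},
        α * ((mpow (mpow a.1 (1 / 2) * (A * A) * mpow a.1 (1 / 2)) (z / α)).trace).re
          + (1 - α) * ((mpow ((mpow a.1 (1 / 2))⁻¹ * (B * B) * (mpow a.1 (1 / 2))⁻¹)
            (z / (1 - α))).trace).re := by
  have hβ : 0 < 1 - α := by linarith
  change _ = ⨅ a : {a : Matrix n n ℂ // a.PosDef}, objF α z A B a.1
  have hFc : ∀ a : Matrix n n ℂ, a.PosDef →
      Continuous fun x => objF α z (shiftM A x) (shiftM B x) a := by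
    intro a ha
    have hc := mpow_posDef ha (1 / 2)
    exact (continuous_const.mul (hFc1 hA.1 hc.1 (div_nonneg (by linarith) hα0.le))).add
      (continuous_const.mul (hFc1 hB.1 hc.inv.1 (div_nonneg (by linarith) hβ.le)))
  have hQt : Filter.Tendsto (fun x => ((mpow (shiftM B x * (shiftM A x * shiftM A x) * shiftM B x) z).trace).re)
      (nhdsWithin 0 (Set.Ioi 0)) (nhds ((mpow (B * (A * A) * B) z).trace).re) := by
    have := ((hQc hA.1 hB.1 (by linarith)).tendsto 0).mono_left (nhdsWithin_le_nhds (s := Set.Ioi 0))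
    simpa only [shiftM_zero] using this
  have lower : ∀ a : Matrix n n ℂ, a.PosDef → ((mpow (B * (A * A) * B) z).trace).re ≤ objF α z A B a := by
    intro a ha
    have hFt : Filter.Tendsto (fun x => objF α z (shiftM A x) (shiftM B x) a)
      (nhdsWithin 0 (Set.Ioi 0)) (nhds (objF α z A B a)) := by
      have := ((hFc a ha).tendsto 0).mono_left (nhdsWithin_le_nhds (s := Set.Ioi 0))
      simpa only [shiftM_zero] using this
    refine le_of_tendsto_of_tendsto hQt hFt ?_
    filter_upwards [self_mem_nhdsWithin] with x hx
    obtain ⟨a₀, -, -, h⟩ := core (posDef_shift hA hx) (posDef_shift hB hx) hα0 hα1 hz1 hz2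
    rw [objF_eq α z (herm_shift hA.1 x) (herm_shift hB.1 x) ha]
    exact h a ha
  have hne : Nonempty {a : Matrix n n ℂ // a.PosDef} := ⟨⟨1, Matrix.PosDef.one⟩⟩
  refine le_antisymm (le_ciInf fun a => lower a.1 a.2) ?_
  refine ge_of_tendsto hQt ?_
  filter_upwards [self_mem_nhdsWithin] with x hx
  obtain ⟨a₀, ha₀, h, -⟩ := core (posDef_shift hA hx) (posDef_shift hB hx) hα0 hα1 hz1 hz2
  have hbdd : BddBelow (Set.range fun a : {a : Matrix n n ℂ // a.PosDef} => objF α z A B a.1) := by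
    refine ⟨((mpow (B * (A * A) * B) z).trace).re, ?_⟩
    rintro _ ⟨a, rfl⟩
    exact lower a.1 a.2
  have hle := ciInf_le hbdd ⟨a₀, ha₀⟩
  refine le_trans hle ?_
  refine le_trans ?_ h.le
  rw [← objF_eq α z (herm_shift hA.1 x) (herm_shift hB.1 x) ha₀]
  have hc := mpow_posDef ha₀ (1 / 2)
  unfold objF
  refine add_le_add (mul_le_mul_of_nonneg_left ?_ hα0.le) (mul_le_mul_of_nonneg_left ?_ hβ.le)
  · refine trace_mono (posSemidef_conj (hsq hA.1) hc.1) ?_ ((one_le_div hα0).2 hz1)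
    rw [← sub_mul, ← mul_sub]
    exact posSemidef_conj (sq_shift hA hx) hc.1
  · refine trace_mono (posSemidef_conj (hsq hB.1) hc.inv.1) ?_ ((one_le_div hβ).2 hz2)
    rw [← sub_mul, ← mul_sub]
    exact posSemidef_conj (sq_shift hB hx) hc.inv.1

end core

/-- Variational expression for `Q_{α,z}` for `0 < α < 1`, `z ≥ max{α, 1−α}`:
`Q_{α,z}(ρ‖σ)` is the infimum over positive definite `a` of
`α Tr((a^{1/2} ρ^{α/z} a^{1/2})^{z/α}) + (1−α) Tr((a^{−1/2} σ^{(1−α)/z} a^{−1/2})^{z/(1−α)})`. -/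
theorem Qaz_variational_eq (n : ℕ) (α z : ℝ) (hα0 : 0 < α) (hα1 : α < 1)
    (hz : max α (1 - α) ≤ z)
    (ρ σ : Matrix (Fin n) (Fin n) ℂ) (hρ : ρ.PosSemidef) (hσ : σ.PosSemidef) :
    Qaz α z ρ σ =
      ⨅ a : {a : Matrix (Fin n) (Fin n) ℂ // a.PosDef},
        α * ((mpow (mpow (a : Matrix (Fin n) (Fin n) ℂ) (1 / 2) * mpow ρ (α / z)
              * mpow (a : Matrix (Fin n) (Fin n) ℂ) (1 / 2)) (z / α)).trace).re
          + (1 - α) * ((mpow ((mpow (a : Matrix (Fin n) (Fin n) ℂ) (1 / 2))⁻¹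
              * mpow σ ((1 - α) / z)
              * (mpow (a : Matrix (Fin n) (Fin n) ℂ) (1 / 2))⁻¹) (z / (1 - α))).trace).re := by
  have hz1 : α ≤ z := le_trans (le_max_left _ _) hz
  have hz2 : 1 - α ≤ z := le_trans (le_max_right _ _) hz
  have hz0 : 0 < z := by linarith
  have hX : mpow ρ (α / z) = mpow ρ (α / (2 * z)) * mpow ρ (α / (2 * z)) := by
    have e : α / (2 * z) + α / (2 * z) = α / z := by field_simp; ring
    have : α / z ≠ 0 := by positivity
    rw [mpow_add' hρ (by rwa [e]), e]
  have hY : mpow σ ((1 - α) / z) = mpow σ ((1 - α) / (2 * z)) * mpow σ ((1 - α) / (2 * z)) := by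
    have e : (1 - α) / (2 * z) + (1 - α) / (2 * z) = (1 - α) / z := by field_simp; ring
    have : (1 - α) / z ≠ 0 := (div_pos (by linarith) hz0).ne'
    rw [mpow_add' hσ (by rwa [e]), e]
  rw [Qaz, hX, hY]
  exact variational (mpow_posSemidef hρ _) (mpow_posSemidef hσ _) hα0 hα1 hz1 hz2
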